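/- Let A₁ = ⟨L₁, ι₁, Σ, δ₁, α₁⟩ be a nondeterministic Büchi automaton, let A₂ᶜ = KVMH(A₂) = ⟨L₂, ι₂, Σ, δ₂, α₂⟩ for a nondeterministic Büchi automaton A₂ over Σ, and let B = A₁ × A₂ᶜ be the product with generalized Büchi condition {β₁, β₂} = {α₁ × L₂, L₁ × α₂}. Define (l₁, l₂) ≼_inc (l₁', l₂') iff l₁ = l₁' and l₂ ≼_univ l₂'. Then ≼_inc is a simulation for B, i.e., for all states q₁, q₂, q₃ of B and all σ ∈ Σ, if q₃ ≼_inc q₁ and q₂ ∈ δ_B(q₁, σ) then there exists q₄ with q₄ ≼_inc q₂ and q₄ ∈ δ_B(q₃, σ); and both β₁ and β₂ are ≼_inc-closed. -/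

import Mathlib

/-!
A state of `KVMH` constrains its successors only through the rank bounds carried by its pairs, so
moving down in `≼_univ`, which raises ranks or drops pairs, can only enlarge the set of successors;
emptiness of the obligation set is preserved, so both states use the same clause of the transition
function. Hence each move of the larger state is literally a move of the smaller one, and
reflexivity of `≼_univ` makes it a simulation for `KVMH`. The product with equality on `A₁` is
`≼_inc`.
-/

/-- A nondeterministic Büchi automaton (NBW) over states `Q` and alphabet `A`:
an initial state, a transition function `δ : Q × A → 2^Q` and accepting states. -/
structure NBW (Q : Type*) (A : Type*) where
  init : Q
  delta : Q → A → Set Q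
  acc : Set Q

namespace NBW

variable {Q A : Type*}

/-- A run of an NBW on the infinite word `w`. -/
def IsRun (M : NBW Q A) (w : ℕ → A) (ρ : ℕ → Q) : Prop :=
  ρ 0 = M.init ∧ ∀ i, ρ (i + 1) ∈ M.delta (ρ i) (w i)

/-- The language of an NBW: words having a run visiting accepting states infinitely often. -/
def Lang (M : NBW Q A) : Set (ℕ → A) :=
  {w | ∃ ρ, M.IsRun w ρ ∧ ∀ n, ∃ i ≥ n, ρ i ∈ M.acc}

/-- `Pre_σ(S)`: the σ-predecessors of the set `S`. -/
def PreSigma (M : NBW Q A) (σ : A) (S : Set Q) : Set Q :=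
  {l | ∃ l' ∈ S, l' ∈ M.delta l σ}

/-- `Pre(S) = ⋃_σ Pre_σ(S)`. -/
def Pre (M : NBW Q A) (S : Set Q) : Set Q :=
  {l | ∃ σ, ∃ l' ∈ S, l' ∈ M.delta l σ}

/-- A pre-order `r` is a simulation for the NBW `M`. -/
def Simulation (M : NBW Q A) (r : Q → Q → Prop) : Prop :=
  (∀ l1 l2 l3 σ, r l3 l1 → l2 ∈ M.delta l1 σ →
      ∃ l4, r l4 l2 ∧ l4 ∈ M.delta l3 σ) ∧
  (∀ l ∈ M.acc, ∀ l', r l' l → l' ∈ M.acc)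

end NBW

/-- A set `S` is `r`-(downward-)closed. -/
def RClosed {Q : Type*} (r : Q → Q → Prop) (S : Set Q) : Prop :=
  ∀ l1 l2, r l1 l2 → l2 ∈ S → l1 ∈ S
/-- `Q_k`: sets of pairs `(l, n)` with `n ≤ k` and `n` even whenever `l ∈ α`. -/
def Qk {Q A : Type*} (M : NBW Q A) (k : ℕ) : Set (Set (Q × ℕ)) :=
  {s | ∀ p ∈ s, p.2 ≤ k ∧ (p.1 ∈ M.acc → Even p.2)}

/-- `odd = L × [k]^odd`. -/
def kvOdd (Q : Type*) (k : ℕ) : Set (Q × ℕ) := {p | Odd p.2 ∧ p.2 ≤ k}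

/-- `∀ (l,n) ∈ s, ∀ l' ∈ δ(l,σ), ∃ n' ≤ n, (l',n') ∈ s'`. -/
def kvStep {Q A : Type*} (M : NBW Q A) (σ : A) (s s' : Set (Q × ℕ)) : Prop :=
  ∀ p ∈ s, ∀ l' ∈ M.delta p.1 σ, ∃ n' ≤ p.2, (l', n') ∈ s'

-- The composition of the Kupferman-Vardi and Miyano-Hayashi constructions:
-- an NBW over `Q_k × Q_k` (embedded in pairs of sets of pairs) accepting `L^c(M)`
-- when `k = 2(|L| - |α|)`.
open Classical in
noncomputable def KVMH {Q A : Type*} (M : NBW Q A) (k : ℕ) :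
    NBW (Set (Q × ℕ) × Set (Q × ℕ)) A where
  init := ({(M.init, k)}, ∅)
  delta := fun p σ =>
    if p.2 = ∅ then
      {q | ∃ s' ∈ Qk M k, q = (s', s' \ kvOdd Q k) ∧ kvStep M σ p.1 s'}
    else
      {q | ∃ s' ∈ Qk M k, ∃ o', q = (s', o' \ kvOdd Q k) ∧ o' ⊆ s' ∧
            kvStep M σ p.1 s' ∧ kvStep M σ p.2 o'}
  acc := {p | p.2 = ∅}

/-- The pre-order `≼_univ` on `Q_k × Q_k`. -/
def univLe {Q : Type*} (p q : Set (Q × ℕ) × Set (Q × ℕ)) : Prop :=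
  (∀ x ∈ p.1, ∃ n' ≤ x.2, (x.1, n') ∈ q.1) ∧
  (∀ x ∈ p.2, ∃ n' ≤ x.2, (x.1, n') ∈ q.2) ∧
  (p.2 = ∅ ↔ q.2 = ∅)
/-- A generalized Büchi automaton with two accepting sets `β₁, β₂`. -/
structure GBA (Q : Type*) (A : Type*) where
  init : Q
  delta : Q → A → Set Q
  acc1 : Set Q
  acc2 : Set Q

namespace GBA

variable {Q A : Type*}

def IsRun (B : GBA Q A) (w : ℕ → A) (ρ : ℕ → Q) : Prop :=
  ρ 0 = B.init ∧ ∀ i, ρ (i + 1) ∈ B.delta (ρ i) (w i)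

/-- Language: words with a run visiting both `β₁` and `β₂` infinitely often. -/
def Lang (B : GBA Q A) : Set (ℕ → A) :=
  {w | ∃ ρ, B.IsRun w ρ ∧ (∀ n, ∃ i ≥ n, ρ i ∈ B.acc1) ∧ (∀ n, ∃ i ≥ n, ρ i ∈ B.acc2)}

def Pre (B : GBA Q A) (S : Set Q) : Set Q :=
  {l | ∃ σ, ∃ l' ∈ S, l' ∈ B.delta l σ}

def preHom (B : GBA Q A) : Set Q →o Set Q :=
  ⟨B.Pre, by rintro S T hST l ⟨σ, l', hl', hd⟩; exact ⟨σ, l', hST hl', hd⟩⟩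

/-- `x ↦ Pre(x) ∪ (Pre(Y) ∩ β)`. -/
def innerHom (B : GBA Q A) (β : Set Q) (Y : Set Q) : Set Q →o Set Q :=
  ⟨fun X => B.Pre X ∪ (B.Pre Y ∩ β), by
    intro S T hST
    exact Set.union_subset_union_left _ ((preHom B).mono hST)⟩

/-- `y ↦ μx₁·[Pre(x₁) ∪ (Pre(y) ∩ β₁)] ∩ μx₂·[Pre(x₂) ∪ (Pre(y) ∩ β₂)]`. -/
def outerHom (B : GBA Q A) : Set Q →o Set Q :=
  ⟨fun Y => OrderHom.lfp (B.innerHom B.acc1 Y) ∩ OrderHom.lfp (B.innerHom B.acc2 Y), by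
    intro Y Y' hY
    apply Set.inter_subset_inter <;>
    · apply OrderHom.lfp.mono
      intro X
      exact Set.union_subset_union_right _
        (Set.inter_subset_inter_left _ ((preHom B).mono hY))⟩

/-- `F'_B = ν y · (μx₁·[Pre(x₁) ∪ (Pre(y) ∩ β₁)] ∩ μx₂·[Pre(x₂) ∪ (Pre(y) ∩ β₂)])`. -/
def FixF (B : GBA Q A) : Set Q := OrderHom.gfp B.outerHom

end GBA

/-- The product of two Büchi automata, with generalized Büchi condition
`{β₁, β₂} = {α₁ × L₂, L₁ × α₂}`. -/
def NBW.prod {Q1 Q2 A : Type*} (M1 : NBW Q1 A) (M2 : NBW Q2 A) : GBA (Q1 × Q2) A where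
  init := (M1.init, M2.init)
  delta := fun p σ => {q | q.1 ∈ M1.delta p.1 σ ∧ q.2 ∈ M2.delta p.2 σ}
  acc1 := {p | p.1 ∈ M1.acc}
  acc2 := {p | p.2 ∈ M2.acc}

/-- The pre-order `≼_inc`: `(l₁,l₂) ≼ (l₁',l₂')` iff `l₁ = l₁'` and `l₂ ≼_univ l₂'`. -/
def incLe {Q1 Q2 : Type*} (p q : Q1 × (Set (Q2 × ℕ) × Set (Q2 × ℕ))) : Prop :=
  p.1 = q.1 ∧ univLe p.2 q.2

/-- `r` is a simulation for the generalized Büchi automaton `B`: as for `NBW.Simulation`, smaller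
states match the moves of larger ones, and both accepting sets are closed under going down. -/
def GBA.Simulation {Q A : Type*} (B : GBA Q A) (r : Q → Q → Prop) : Prop :=
  (∀ q1 q2 q3 σ, r q3 q1 → q2 ∈ B.delta q1 σ → ∃ q4, r q4 q2 ∧ q4 ∈ B.delta q3 σ) ∧
  RClosed r B.acc1 ∧ RClosed r B.acc2

namespace NBW

variable {Q Q1 Q2 A : Type*}

theorem simulation_of_delta_antitone {M : NBW Q A} {r : Q → Q → Prop} (hrefl : ∀ q, r q q)
    (hdelta : ∀ ⦃p q⦄, r p q → ∀ σ, M.delta q σ ⊆ M.delta p σ) (hacc : RClosed r M.acc) :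
    M.Simulation r :=
  ⟨fun _ q2 _ σ hr hq2 => ⟨q2, hrefl q2, hdelta hr σ hq2⟩, fun q hq p hr => hacc p q hr hq⟩

theorem simulation_eq (M : NBW Q A) : M.Simulation Eq :=
  simulation_of_delta_antitone (fun _ => rfl) (fun _ _ h _ => h ▸ Set.Subset.rfl)
    (fun _ _ h hq => h ▸ hq)

theorem Simulation.prod {M1 : NBW Q1 A} {M2 : NBW Q2 A} {r1 : Q1 → Q1 → Prop}
    {r2 : Q2 → Q2 → Prop} (h1 : M1.Simulation r1) (h2 : M2.Simulation r2) :
    (M1.prod M2).Simulation fun p q => r1 p.1 q.1 ∧ r2 p.2 q.2 := by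
  refine ⟨?_, fun p q hr hq => h1.2 q.1 hq p.1 hr.1, fun p q hr hq => h2.2 q.2 hq p.2 hr.2⟩
  rintro q1 q2 q3 σ ⟨hr1, hr2⟩ ⟨hd1, hd2⟩
  obtain ⟨l1, hl1, hl1d⟩ := h1.1 q1.1 q2.1 q3.1 σ hr1 hd1
  obtain ⟨l2, hl2, hl2d⟩ := h2.1 q1.2 q2.2 q3.2 σ hr2 hd2
  exact ⟨(l1, l2), ⟨hl1, hl2⟩, hl1d, hl2d⟩

end NBW

/-- The pre-order on sets of ranked states underlying `≼_univ`: every pair of `s` has a pair of `t`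
with the same state and at most the same rank. -/
def RankLe {Q : Type*} (s t : Set (Q × ℕ)) : Prop :=
  ∀ x ∈ s, ∃ n' ≤ x.2, (x.1, n') ∈ t

section KVMH

variable {Q A : Type*}

theorem RankLe.refl (s : Set (Q × ℕ)) : RankLe s s :=
  fun x hx => ⟨x.2, le_rfl, hx⟩

theorem univLe_refl (p : Set (Q × ℕ) × Set (Q × ℕ)) : univLe p p :=
  ⟨RankLe.refl p.1, RankLe.refl p.2, Iff.rfl⟩

theorem kvStep.anti_left {M : NBW Q A} {σ : A} {s t s' : Set (Q × ℕ)} (ht : kvStep M σ t s')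
    (hst : RankLe s t) : kvStep M σ s s' := by
  intro x hx l' hl'
  obtain ⟨n, hn, hnt⟩ := hst x hx
  obtain ⟨m, hm, hms'⟩ := ht (x.1, n) hnt l' hl'
  exact ⟨m, hm.trans hn, hms'⟩

theorem KVMH_delta_of_eq_empty (M : NBW Q A) (k : ℕ) (σ : A) {p : Set (Q × ℕ) × Set (Q × ℕ)}
    (hp : p.2 = ∅) :
    (KVMH M k).delta p σ = {q | ∃ s' ∈ Qk M k, q = (s', s' \ kvOdd Q k) ∧ kvStep M σ p.1 s'} :=
  if_pos hp

theorem KVMH_delta_of_ne_empty (M : NBW Q A) (k : ℕ) (σ : A) {p : Set (Q × ℕ) × Set (Q × ℕ)}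
    (hp : p.2 ≠ ∅) :
    (KVMH M k).delta p σ = {q | ∃ s' ∈ Qk M k, ∃ o', q = (s', o' \ kvOdd Q k) ∧ o' ⊆ s' ∧
      kvStep M σ p.1 s' ∧ kvStep M σ p.2 o'} :=
  if_neg hp

theorem KVMH_delta_antitone (M : NBW Q A) (k : ℕ) {p q : Set (Q × ℕ) × Set (Q × ℕ)}
    (hpq : univLe p q) (σ : A) : (KVMH M k).delta q σ ⊆ (KVMH M k).delta p σ := by
  obtain ⟨hs, ho, hempty⟩ := hpq
  by_cases hq : q.2 = ∅
  · rw [KVMH_delta_of_eq_empty M k σ hq, KVMH_delta_of_eq_empty M k σ (hempty.2 hq)]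
    rintro _ ⟨s', hs', rfl, hstep⟩
    exact ⟨s', hs', rfl, hstep.anti_left hs⟩
  · rw [KVMH_delta_of_ne_empty M k σ hq, KVMH_delta_of_ne_empty M k σ (mt hempty.1 hq)]
    rintro _ ⟨s', hs', o', rfl, hsub, hstep, hostep⟩
    exact ⟨s', hs', o', rfl, hsub, hstep.anti_left hs, hostep.anti_left ho⟩

theorem KVMH_simulation_univLe (M : NBW Q A) (k : ℕ) : (KVMH M k).Simulation univLe :=
  NBW.simulation_of_delta_antitone univLe_refl (fun _ _ h => KVMH_delta_antitone M k h)
    (fun _ _ h hq => h.2.2.2 hq)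

end KVMH

theorem incLe_simulation_general {Q1 Q2 A : Type*} (M1 : NBW Q1 A) (M2 : NBW Q2 A) (k : ℕ) :
    (M1.prod (KVMH M2 k)).Simulation incLe :=
  M1.simulation_eq.prod (KVMH_simulation_univLe M2 k)

/-- `≼_inc` is a simulation for `B = A₁ × KVMH(A₂)`: the transition property holds
and both `β₁` and `β₂` are `≼_inc`-closed. -/
theorem incLe_simulation {Q1 Q2 A : Type*} [Fintype Q1] [Fintype Q2] [Fintype A]
    (M1 : NBW Q1 A) (M2 : NBW Q2 A) (k : ℕ)
    (hk : k = 2 * (Fintype.card Q2 - M2.acc.ncard)) :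
    (∀ q1 q2 q3 (σ : A), incLe q3 q1 → q2 ∈ (M1.prod (KVMH M2 k)).delta q1 σ →
        ∃ q4, incLe q4 q2 ∧ q4 ∈ (M1.prod (KVMH M2 k)).delta q3 σ) ∧
    RClosed incLe (M1.prod (KVMH M2 k)).acc1 ∧
    RClosed incLe (M1.prod (KVMH M2 k)).acc2 :=
  incLe_simulation_general M1 M2 k
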